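/- Let $G$ be an elementary abelian group of order $p^n$, $p$ odd, and let $\mathrm{Aut}(G) = GL_n(\mathbb{F}_p)$ act diagonally on $\widehat{G} \oplus \mathrm{Alt}(G)$ (dual space plus alternating bilinear forms). Then the number of orbits of this action is $\lfloor (3n+2)/2 \rfloor$. -/

import Mathlib

/-!
Darboux's theorem in coordinate-free shape: subtracting from an alternating form `B` with
`B u w = 1` the wedge `B(·, w) ∧ B(u, ·)` puts `u` and `w` into the radical, so by induction `B`
is the pullback of a standard symplectic form along a *surjective* linear map. When `χ ≠ 0`
vanishes on the radical of `B`, it is of the form `B(·, w)`, and starting the induction with this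
`w` makes `χ` the first coordinate of that surjection. When `χ` does not vanish on the radical,
adjoining `χ` to the surjection as a further coordinate keeps it surjective. So every pair
`(χ, B)` is the pullback, along a surjection, of one of a list of model pairs. Surjections onto the
same space differ by an automorphism of the source, so an orbit is determined by its model; the
rank of `B` and the conditions `χ = 0` and `rad B ⊆ ker χ` do not change under surjective pullback,
so they separate the models; and a model is attained exactly when its dimension is at most `dim V`.
-/

open Module Function

section Surjections

variable {K V W : Type*} [Field K] [AddCommGroup V] [Module K V] [AddCommGroup W] [Module K W]

theorem exists_linearEquiv_prod_ker_fst_eq {π : V →ₗ[K] W} (hπ : Surjective π) :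
    ∃ e : V ≃ₗ[K] W × LinearMap.ker π, ∀ v, (e v).1 = π v := by
  obtain ⟨Q, hQ⟩ := Submodule.exists_isCompl (LinearMap.ker π)
  exact ⟨LinearMap.equivProdOfSurjectiveOfIsCompl π ((LinearMap.ker π).projectionOnto Q hQ)
    (LinearMap.range_eq_top.2 hπ) (Submodule.range_projectionOnto hQ)
    (by simpa using hQ), fun _ => rfl⟩

theorem exists_linearEquiv_comp_eq_of_surjective [FiniteDimensional K V] {π π' : V →ₗ[K] W}
    (hπ : Surjective π) (hπ' : Surjective π') :
    ∃ φ : V ≃ₗ[K] V, π' ∘ₗ φ.toLinearMap = π := by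
  obtain ⟨e, he⟩ := exists_linearEquiv_prod_ker_fst_eq hπ
  obtain ⟨e', he'⟩ := exists_linearEquiv_prod_ker_fst_eq hπ'
  have hker : finrank K (LinearMap.ker π) = finrank K (LinearMap.ker π') := by
    have h := π.finrank_range_add_finrank_ker
    have h' := π'.finrank_range_add_finrank_ker
    rw [LinearMap.range_eq_top.2 hπ, finrank_top] at h
    rw [LinearMap.range_eq_top.2 hπ', finrank_top] at h'
    lia
  let k := LinearEquiv.ofFinrankEq (LinearMap.ker π) (LinearMap.ker π') hker
  refine ⟨e ≪≫ₗ (LinearEquiv.refl K W).prodCongr k ≪≫ₗ e'.symm, LinearMap.ext fun v => ?_⟩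
  simp [← he, ← he']

theorem exists_surjective_iff_finrank_le [FiniteDimensional K V] [FiniteDimensional K W] :
    (∃ π : V →ₗ[K] W, Surjective π) ↔ finrank K W ≤ finrank K V := by
  refine ⟨fun ⟨π, hπ⟩ => LinearMap.finrank_le_finrank_of_surjective hπ, fun h => ?_⟩
  obtain ⟨f, hf⟩ := finrank_le_iff_exists_linearMap.1 h
  obtain ⟨π, hπ⟩ := f.exists_leftInverse_of_injective (LinearMap.ker_eq_bot.2 hf)
  exact ⟨π, fun w => ⟨f w, LinearMap.congr_fun hπ w⟩⟩

theorem surjective_prod_of_not_ker_le_ker {π : V →ₗ[K] W} (hπ : Surjective π) {χ : V →ₗ[K] K}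
    (h : ¬ LinearMap.ker π ≤ LinearMap.ker χ) : Surjective (π.prod χ) := by
  obtain ⟨u, hu, hχu⟩ := SetLike.not_le_iff_exists.1 h
  rw [LinearMap.mem_ker] at hu hχu
  rintro ⟨w, c⟩
  obtain ⟨v, rfl⟩ := hπ w
  exact ⟨v + ((c - χ v) / χ u) • u, by simp [hu, hχu]⟩

end Surjections

section BilinearForms

variable {R M N : Type*} [CommRing R] [AddCommGroup M] [Module R M] [AddCommGroup N] [Module R N]

theorem ker_compl₁₂_of_surjective (B : N →ₗ[R] N →ₗ[R] R) (f : M →ₗ[R] N) {g : M →ₗ[R] N}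
    (hg : Surjective g) : LinearMap.ker (B.compl₁₂ f g) = (LinearMap.ker B).comap f := by
  ext x
  simp only [LinearMap.mem_ker, Submodule.mem_comap, LinearMap.ext_iff, hg.forall,
    LinearMap.compl₁₂_apply, LinearMap.zero_apply]

theorem finrank_range_compl₁₂_of_surjective (B : N →ₗ[R] N →ₗ[R] R) {f g : M →ₗ[R] N}
    (hf : Surjective f) (hg : Surjective g) :
    finrank R (LinearMap.range (B.compl₁₂ f g)) = finrank R (LinearMap.range B) := by
  have hcomp : B.compl₁₂ f g = g.dualMap ∘ₗ B ∘ₗ f := rfl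
  rw [hcomp, LinearMap.range_comp, LinearMap.range_comp_of_range_eq_top B
    (LinearMap.range_eq_top.2 hf)]
  exact (Submodule.equivMapOfInjective _
    (LinearMap.dualMap_injective_of_surjective hg) _).finrank_eq.symm

/-- The alternating bilinear form `f ∧ g : (x, y) ↦ f x * g y - g x * f y`. -/
def wedge (f g : M →ₗ[R] R) : M →ₗ[R] M →ₗ[R] R :=
  LinearMap.BilinForm.linMulLin f g - LinearMap.BilinForm.linMulLin g f

@[simp]
theorem wedge_apply (f g : M →ₗ[R] R) (x y : M) : wedge f g x y = f x * g y - g x * f y :=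
  rfl

theorem isAlt_wedge (f g : M →ₗ[R] R) : (wedge f g).IsAlt := fun x => by
  rw [wedge_apply, mul_comm, sub_self]

section HyperbolicPair

variable {B : M →ₗ[R] M →ₗ[R] R} {u w : M}

theorem left_mem_ker_sub_wedge (hB : B.IsAlt) (huw : B u w = 1) :
    u ∈ LinearMap.ker (B - wedge (B.flip w) (B u)) := by
  ext y
  simp [huw, hB u]

theorem right_mem_ker_sub_wedge (hB : B.IsAlt) (huw : B u w = 1) :
    w ∈ LinearMap.ker (B - wedge (B.flip w) (B u)) := by
  ext y
  simp [huw, hB w, ← hB.neg y w]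

theorem ker_le_ker_sub_wedge (hB : B.IsAlt) :
    LinearMap.ker B ≤ LinearMap.ker (B - wedge (B.flip w) (B u)) := by
  intro x hx
  rw [LinearMap.mem_ker] at hx
  ext y
  simp [hx, ← hB.neg x u]

theorem ker_lt_ker_sub_wedge [Nontrivial R] (hB : B.IsAlt) (huw : B u w = 1) :
    LinearMap.ker B < LinearMap.ker (B - wedge (B.flip w) (B u)) := by
  refine (ker_le_ker_sub_wedge hB).lt_of_not_ge fun h => one_ne_zero (α := R) ?_
  rw [← huw, LinearMap.mem_ker.1 (h (left_mem_ker_sub_wedge hB huw)), LinearMap.zero_apply]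

end HyperbolicPair

end BilinearForms

section Darboux

variable {K V : Type*} [Field K] [AddCommGroup V] [Module K V]

/-- The standard symplectic form on `K ^ (2 r)`, whose coordinates are grouped into `r`
hyperbolic pairs. -/
def symplecticForm (K : Type*) [Field K] (r : ℕ) :
    (Fin r → K × K) →ₗ[K] (Fin r → K × K) →ₗ[K] K :=
  ∑ i, wedge (LinearMap.fst K K K ∘ₗ LinearMap.proj i) (LinearMap.snd K K K ∘ₗ LinearMap.proj i)

theorem symplecticForm_apply (r : ℕ) (x y : Fin r → K × K) :
    symplecticForm K r x y = ∑ i, ((x i).1 * (y i).2 - (x i).2 * (y i).1) := by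
  simp [symplecticForm, LinearMap.sum_apply]

theorem isAlt_symplecticForm (r : ℕ) : (symplecticForm K r).IsAlt := fun x => by
  simp [symplecticForm_apply, mul_comm]

theorem ker_symplecticForm (r : ℕ) : LinearMap.ker (symplecticForm K r) = ⊥ := by
  refine (LinearMap.ker_eq_bot').2 fun x hx => funext fun i => ?_
  have hpair (a b : K) : (x i).1 * b - (x i).2 * a = 0 := by
    have h := LinearMap.congr_fun hx (Pi.single i (a, b))
    rw [symplecticForm_apply, Finset.sum_eq_single i (fun j _ hj => by simp [hj]) (by simp)] at h
    simpa using h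
  exact Prod.ext (by simpa using hpair 0 1) (by simpa using hpair 1 0)

theorem finrank_fin_fun_prod_self (r : ℕ) : finrank K (Fin r → K × K) = 2 * r := by
  simp [finrank_pi_fintype, mul_comm]

theorem finrank_range_symplecticForm (r : ℕ) :
    finrank K (LinearMap.range (symplecticForm K r)) = 2 * r := by
  rw [LinearMap.finrank_range_of_inj (LinearMap.ker_eq_bot.1 (ker_symplecticForm r)),
    finrank_fin_fun_prod_self]

theorem ker_symplecticForm_compl₁₂ {r : ℕ} {π : V →ₗ[K] Fin r → K × K} (hπ : Surjective π) :
    LinearMap.ker ((symplecticForm K r).compl₁₂ π π) = LinearMap.ker π := by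
  rw [ker_compl₁₂_of_surjective _ _ hπ, ker_symplecticForm, Submodule.comap_bot]

theorem exists_symplecticForm_succ_compl₁₂ {B : V →ₗ[K] V →ₗ[K] K} (hB : B.IsAlt) {u w : V}
    (huw : B u w = 1) {r : ℕ} {ρ : V →ₗ[K] Fin r → K × K} (hρ : Surjective ρ)
    (h : B - wedge (B.flip w) (B u) = (symplecticForm K r).compl₁₂ ρ ρ) :
    ∃ π : V →ₗ[K] Fin (r + 1) → K × K, Surjective π ∧
      B = (symplecticForm K (r + 1)).compl₁₂ π π ∧ ∀ v, (π v 0).1 = B v w := by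
  have hker := ker_symplecticForm_compl₁₂ hρ
  rw [← h] at hker
  have hρu : ρ u = 0 := LinearMap.mem_ker.1 (hker ▸ left_mem_ker_sub_wedge hB huw)
  have hρw : ρ w = 0 := LinearMap.mem_ker.1 (hker ▸ right_mem_ker_sub_wedge hB huw)
  let π : V →ₗ[K] Fin (r + 1) → K × K :=
    LinearMap.pi (Fin.cons ((B.flip w).prod (B u)) fun i => LinearMap.proj i ∘ₗ ρ)
  have hπ_zero (v : V) : π v 0 = (B v w, B u v) := rfl
  have hπ_succ (v : V) (i : Fin r) : π v i.succ = ρ v i := rfl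
  refine ⟨π, fun z => ?_, LinearMap.ext₂ fun x y => ?_, fun v => by rw [hπ_zero]⟩
  · obtain ⟨v, hv⟩ := hρ (Fin.tail z)
    refine ⟨v + ((z 0).1 - B v w) • u + ((z 0).2 - B u v) • w, funext (Fin.cases ?_ fun i => ?_)⟩
    · simp [hπ_zero, huw, hB u, hB w]
    · simp [hπ_succ, hρu, hρw, hv, Fin.tail]
  · have hxy := LinearMap.congr_fun₂ h x y
    simp only [LinearMap.sub_apply, wedge_apply, LinearMap.flip_apply, LinearMap.compl₁₂_apply,
      symplecticForm_apply] at hxy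
    simp only [LinearMap.compl₁₂_apply, symplecticForm_apply, Fin.sum_univ_succ, hπ_zero, hπ_succ,
      ← hxy]
    ring

theorem exists_eq_symplecticForm_compl₁₂ [FiniteDimensional K V] {B : V →ₗ[K] V →ₗ[K] K}
    (hB : B.IsAlt) :
    ∃ (r : ℕ) (π : V →ₗ[K] Fin r → K × K), Surjective π ∧ B = (symplecticForm K r).compl₁₂ π π := by
  induction hk : LinearMap.ker B using WellFoundedGT.induction generalizing B with
  | _ S ih =>
    subst hk
    by_cases h0 : B = 0
    · exact ⟨0, 0, surjective_to_subsingleton _, by ext; simp [h0, symplecticForm]⟩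
    obtain ⟨w, hw⟩ : ∃ w, B.flip w ≠ 0 := by
      by_contra! h
      exact h0 (LinearMap.ext₂ fun x y => LinearMap.congr_fun (h y) x)
    obtain ⟨u, huw⟩ := LinearMap.surjective hw 1
    obtain ⟨r, ρ, hρ, h⟩ := ih _ (ker_lt_ker_sub_wedge hB huw)
      (LinearMap.BilinForm.IsAlt.sub hB (isAlt_wedge _ _)) rfl
    obtain ⟨π, hπ, hBπ, -⟩ := exists_symplecticForm_succ_compl₁₂ hB huw hρ h
    exact ⟨r + 1, π, hπ, hBπ⟩

theorem exists_eq_symplecticForm_compl₁₂_and_eq_fst [FiniteDimensional K V]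
    {B : V →ₗ[K] V →ₗ[K] K} (hB : B.IsAlt) {χ : V →ₗ[K] K} (hχ : χ ≠ 0)
    (hker : LinearMap.ker B ≤ LinearMap.ker χ) :
    ∃ (r : ℕ) (π : V →ₗ[K] Fin (r + 1) → K × K), Surjective π ∧
      B = (symplecticForm K (r + 1)).compl₁₂ π π ∧ ∀ v, χ v = (π v 0).1 := by
  have hrange : χ ∈ LinearMap.range B.flip := by
    rw [← LinearMap.dualAnnihilator_ker_eq_range_flip, Submodule.mem_dualAnnihilator]
    exact hker
  obtain ⟨w, rfl⟩ := hrange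
  obtain ⟨u, huw⟩ := LinearMap.surjective hχ 1
  obtain ⟨r, ρ, hρ, h⟩ := exists_eq_symplecticForm_compl₁₂
    (LinearMap.BilinForm.IsAlt.sub hB (isAlt_wedge (B.flip w) (B u)))
  obtain ⟨π, hπ, hBπ, hfst⟩ := exists_symplecticForm_succ_compl₁₂ hB huw hρ h
  exact ⟨r, π, hπ, hBπ, fun v => (hfst v).symm⟩

end Darboux

/-- A pair `(χ, B)` of a linear functional and an alternating bilinear form, i.e. an element of
`Ĝ ⊕ Alt(G)` for the vector space `G = V`. -/
abbrev AltPair (K V : Type*) [Field K] [AddCommGroup V] [Module K V] : Type _ :=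
  (V →ₗ[K] K) × {B : V →ₗ[K] V →ₗ[K] K // ∀ v, B v v = 0}

namespace AltPair

variable {K V W : Type*} [Field K] [AddCommGroup V] [Module K V] [AddCommGroup W] [Module K W]

/-- The pullback `(χ ∘ π, B(π ·, π ·))` of a pair along a linear map `π`. Acting by `φ` on a pair
is pulling it back along `φ⁻¹`, and the model of an orbit pulls back to the pairs in the orbit. -/
def pullback (x : AltPair K W) (π : V →ₗ[K] W) : AltPair K V :=
  (x.1 ∘ₗ π, ⟨x.2.1.compl₁₂ π π, fun _ => x.2.2 _⟩)

/-- Two pairs on `V` are related if some `φ ∈ GL(V)` carries the first to the second. -/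
def OrbitRel (x y : AltPair K V) : Prop :=
  ∃ φ : V ≃ₗ[K] V, y.1 = x.1.comp φ.symm.toLinearMap ∧
    (y.2 : V →ₗ[K] V →ₗ[K] K) =
      (x.2 : V →ₗ[K] V →ₗ[K] K).compl₁₂ φ.symm.toLinearMap φ.symm.toLinearMap

theorem orbitRel_iff {x y : AltPair K V} :
    OrbitRel x y ↔ ∃ φ : V ≃ₗ[K] V, y = x.pullback φ.symm.toLinearMap := by
  simp only [OrbitRel, pullback, Prod.ext_iff, Subtype.ext_iff]

/-- `x` is the pullback of the model `m` along some surjection. -/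
def IsSurjectivePullback (m : AltPair K W) (x : AltPair K V) : Prop :=
  ∃ π : V →ₗ[K] W, Surjective π ∧ x = m.pullback π

theorem IsSurjectivePullback.orbitRel [FiniteDimensional K V] {m : AltPair K W} {x y : AltPair K V}
    (hx : IsSurjectivePullback m x) (hy : IsSurjectivePullback m y) : OrbitRel x y := by
  obtain ⟨π, hπ, rfl⟩ := hx
  obtain ⟨π', hπ', rfl⟩ := hy
  obtain ⟨φ, rfl⟩ := exists_linearEquiv_comp_eq_of_surjective hπ' hπ
  exact orbitRel_iff.2 ⟨φ.symm, rfl⟩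

theorem exists_isSurjectivePullback_iff [FiniteDimensional K V] [FiniteDimensional K W]
    (m : AltPair K W) :
    (∃ x : AltPair K V, IsSurjectivePullback m x) ↔ finrank K W ≤ finrank K V := by
  rw [← exists_surjective_iff_finrank_le]
  exact ⟨fun ⟨_, π, hπ, _⟩ => ⟨π, hπ⟩, fun ⟨π, hπ⟩ => ⟨m.pullback π, π, hπ, rfl⟩⟩

/-- The invariants of a pair `(χ, B)` that classify its orbit: the rank of `B` (twice its width),
whether `χ = 0`, and whether `χ` vanishes on the radical of `B`. -/
noncomputable def invariants (x : AltPair K V) : ℕ × Prop × Prop :=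
  (finrank K (LinearMap.range x.2.1), x.1 = 0, LinearMap.ker x.2.1 ≤ LinearMap.ker x.1)

theorem IsSurjectivePullback.invariants_eq {m : AltPair K W} {x : AltPair K V}
    (hx : IsSurjectivePullback m x) : x.invariants = m.invariants := by
  obtain ⟨π, hπ, rfl⟩ := hx
  have hzero : m.1 ∘ₗ π = 0 ↔ m.1 = 0 := by
    rw [← LinearMap.zero_comp π, LinearMap.cancel_right hπ]
  have hker : LinearMap.ker (m.2.1.compl₁₂ π π) ≤ LinearMap.ker (m.1 ∘ₗ π) ↔
      LinearMap.ker m.2.1 ≤ LinearMap.ker m.1 := by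
    rw [ker_compl₁₂_of_surjective _ _ hπ, LinearMap.ker_comp,
      Submodule.comap_le_comap_iff_of_surjective hπ]
  exact Prod.ext (finrank_range_compl₁₂_of_surjective _ hπ hπ)
    (Prod.ext (propext hzero) (propext hker))

theorem OrbitRel.invariants_eq {x y : AltPair K V} (h : OrbitRel x y) :
    x.invariants = y.invariants := by
  obtain ⟨φ, rfl⟩ := orbitRel_iff.1 h
  exact (IsSurjectivePullback.invariants_eq ⟨_, φ.symm.surjective, rfl⟩).symm

section Models

variable (K) (r : ℕ)

/-- The model of the pairs of width `r` with zero functional. -/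
def zeroModel : AltPair K (Fin r → K × K) :=
  (0, ⟨symplecticForm K r, isAlt_symplecticForm r⟩)

/-- The model of the pairs of width `r + 1` whose functional is nonzero and vanishes on the
radical: the functional is a symplectic coordinate. -/
def innerModel : AltPair K (Fin (r + 1) → K × K) :=
  (LinearMap.fst K K K ∘ₗ LinearMap.proj 0,
    ⟨symplecticForm K (r + 1), isAlt_symplecticForm (r + 1)⟩)

/-- The model of the pairs of width `r` whose functional does not vanish on the radical: the
functional is a coordinate on a line in the radical. -/
def outerModel : AltPair K ((Fin r → K × K) × K) :=
  (LinearMap.snd K _ K, ⟨(symplecticForm K r).compl₁₂ (LinearMap.fst K _ K) (LinearMap.fst K _ K),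
    fun _ => isAlt_symplecticForm r _⟩)

theorem invariants_zeroModel : (zeroModel K r).invariants = (2 * r, True, True) :=
  Prod.ext (finrank_range_symplecticForm r) (by simp [invariants, zeroModel])

theorem invariants_innerModel : (innerModel K r).invariants = (2 * (r + 1), False, True) := by
  have hne : LinearMap.fst K K K ∘ₗ LinearMap.proj (φ := fun _ : Fin (r + 1) => K × K) 0 ≠ 0 :=
    fun h => by simpa using LinearMap.congr_fun h fun _ => (1, 0)
  exact Prod.ext (finrank_range_symplecticForm (r + 1))
    (by simp [invariants, innerModel, ker_symplecticForm, hne])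

theorem invariants_outerModel : (outerModel K r).invariants = (2 * r, False, False) := by
  have hfst : Surjective (LinearMap.fst K (Fin r → K × K) K) := LinearMap.fst_surjective
  have hne : LinearMap.snd K (Fin r → K × K) K ≠ 0 :=
    fun h => by simpa using LinearMap.congr_fun h (0, 1)
  have hker : ¬ LinearMap.ker (LinearMap.fst K (Fin r → K × K) K) ≤
      LinearMap.ker (LinearMap.snd K (Fin r → K × K) K) :=
    fun h => by simpa using h (show ((0, 1) : (Fin r → K × K) × K) ∈ _ by simp)
  have hrank := (finrank_range_compl₁₂_of_surjective (symplecticForm K r) hfst hfst).trans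
    (finrank_range_symplecticForm r)
  exact Prod.ext hrank
    (by simp [invariants, outerModel, ker_symplecticForm_compl₁₂ hfst, hne, hker])

end Models

/-- The labels of the models: the zero functional with width `r`, a nonzero functional
vanishing on the radical with width `r + 1`, and a functional not vanishing on the radical with
width `r`. -/
inductive OrbitType
  | zero (r : ℕ)
  | inner (r : ℕ)
  | outer (r : ℕ)

/-- The dimension of the space carrying the model, the smallest in which the orbit type occurs. -/
def OrbitType.dim : OrbitType → ℕ
  | .zero r => 2 * r
  | .inner r => 2 * (r + 1)
  | .outer r => 2 * r + 1

/-- The pair `x` is a pullback, along a surjection, of the model with the given label. -/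
def HasType (x : AltPair K V) : OrbitType → Prop
  | .zero r => IsSurjectivePullback (zeroModel K r) x
  | .inner r => IsSurjectivePullback (innerModel K r) x
  | .outer r => IsSurjectivePullback (outerModel K r) x

theorem exists_hasType [FiniteDimensional K V] (x : AltPair K V) : ∃ t, x.HasType t := by
  obtain ⟨χ, B, hB⟩ := x
  by_cases hker : LinearMap.ker B ≤ LinearMap.ker χ
  · by_cases hχ : χ = 0
    · obtain ⟨r, π, hπ, rfl⟩ := exists_eq_symplecticForm_compl₁₂ hB
      exact ⟨.zero r, π, hπ, Prod.ext hχ rfl⟩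
    · obtain ⟨r, π, hπ, rfl, hfst⟩ := exists_eq_symplecticForm_compl₁₂_and_eq_fst hB hχ hker
      exact ⟨.inner r, π, hπ, Prod.ext (LinearMap.ext hfst) rfl⟩
  · obtain ⟨r, π, hπ, rfl⟩ := exists_eq_symplecticForm_compl₁₂ hB
    rw [ker_symplecticForm_compl₁₂ hπ] at hker
    exact ⟨.outer r, π.prod χ, surjective_prod_of_not_ker_le_ker hπ hker, rfl⟩

theorem HasType.orbitRel [FiniteDimensional K V] {x y : AltPair K V} {t : OrbitType}
    (hx : x.HasType t) (hy : y.HasType t) : OrbitRel x y := by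
  cases t <;> exact IsSurjectivePullback.orbitRel hx hy

theorem HasType.eq_of_invariants_eq {x y : AltPair K V} {s t : OrbitType} (hx : x.HasType s)
    (hy : y.HasType t) (h : x.invariants = y.invariants) : s = t := by
  cases s <;> cases t <;>
    rw [IsSurjectivePullback.invariants_eq hx, IsSurjectivePullback.invariants_eq hy] at h <;>
    simp_all [invariants_zeroModel, invariants_innerModel, invariants_outerModel]

theorem exists_hasType_iff_dim_le [FiniteDimensional K V] (t : OrbitType) :
    (∃ x : AltPair K V, x.HasType t) ↔ t.dim ≤ finrank K V := by
  cases t <;> refine (exists_isSurjectivePullback_iff _).trans ?_ <;>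
    simp [OrbitType.dim, finrank_fin_fun_prod_self]

/-- The orbit types occurring in dimension `n`, listed by their parameter `r`. -/
def OrbitType.dimLeEquiv (n : ℕ) :
    {t : OrbitType // t.dim ≤ n} ≃ Fin (n / 2 + 1) ⊕ Fin (n / 2) ⊕ Fin ((n + 1) / 2) where
  toFun
    | ⟨.zero r, h⟩ => .inl ⟨r, by simp only [dim] at h; lia⟩
    | ⟨.inner r, h⟩ => .inr (.inl ⟨r, by simp only [dim] at h; lia⟩)
    | ⟨.outer r, h⟩ => .inr (.inr ⟨r, by simp only [dim] at h; lia⟩)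
  invFun
    | .inl r => ⟨.zero r, by simp only [dim]; lia⟩
    | .inr (.inl r) => ⟨.inner r, by simp only [dim]; lia⟩
    | .inr (.inr r) => ⟨.outer r, by simp only [dim]; lia⟩
  left_inv := by rintro ⟨_ | _ | _, _⟩ <;> rfl
  right_inv := by rintro (_ | _ | _) <;> rfl

theorem OrbitType.card_dim_le (n : ℕ) :
    Nat.card {t : OrbitType // t.dim ≤ n} = (3 * n + 2) / 2 := by
  simp only [Nat.card_congr (dimLeEquiv n), Nat.card_eq_fintype_card, Fintype.card_sum,
    Fintype.card_fin]
  lia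

end AltPair

theorem stmt13_general (K V : Type*) [Field K] [AddCommGroup V] [Module K V]
    [FiniteDimensional K V] :
    Nat.card (Quot (AltPair.OrbitRel (K := K) (V := V))) = (3 * finrank K V + 2) / 2 := by
  rw [← AltPair.OrbitType.card_dim_le]
  choose model hmodel using fun t : {t : AltPair.OrbitType // t.dim ≤ finrank K V} =>
    (AltPair.exists_hasType_iff_dim_le (K := K) (V := V) t.1).2 t.2
  have hinj : Injective fun t => Quot.mk AltPair.OrbitRel (model t) := fun s t h => by
    have hinv : (model s).invariants = (model t).invariants :=
      congrArg (Quot.lift AltPair.invariants fun _ _ => AltPair.OrbitRel.invariants_eq) h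
    exact Subtype.ext ((hmodel s).eq_of_invariants_eq (hmodel t) hinv)
  have hsurj : Surjective fun t => Quot.mk AltPair.OrbitRel (model t) := by
    rintro ⟨x⟩
    obtain ⟨t, ht⟩ := AltPair.exists_hasType x
    have hdim : t.dim ≤ finrank K V := (AltPair.exists_hasType_iff_dim_le t).1 ⟨x, ht⟩
    exact ⟨⟨t, hdim⟩, Quot.sound ((hmodel ⟨t, hdim⟩).orbitRel ht)⟩
  exact (Nat.card_congr (Equiv.ofBijective _ ⟨hinj, hsurj⟩)).symm

/-- for `G` elementary abelian of order `p^n` (`p` odd), the number of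
orbits of `GL_n(𝔽_p)` acting diagonally on `Ĝ ⊕ Alt(G)` (linear functionals paired
with alternating bilinear forms, acted on by `χ.φ = χ∘φ⁻¹`, `β.φ = β(φ⁻¹·, φ⁻¹·)`)
equals `⌊(3n+2)/2⌋`. -/
theorem stmt13 (p n : ℕ) [Fact p.Prime] (hp2 : p ≠ 2) :
    Nat.card (Quot (fun (x y : ((Fin n → ZMod p) →ₗ[ZMod p] ZMod p) ×
        {B : (Fin n → ZMod p) →ₗ[ZMod p] (Fin n → ZMod p) →ₗ[ZMod p] ZMod p //
          ∀ v, B v v = 0}) =>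
      ∃ φ : (Fin n → ZMod p) ≃ₗ[ZMod p] (Fin n → ZMod p),
        y.1 = x.1.comp φ.symm.toLinearMap ∧
        (y.2 : (Fin n → ZMod p) →ₗ[ZMod p] (Fin n → ZMod p) →ₗ[ZMod p] ZMod p)
          = (x.2 : (Fin n → ZMod p) →ₗ[ZMod p] (Fin n → ZMod p) →ₗ[ZMod p] ZMod p).compl₁₂
              φ.symm.toLinearMap φ.symm.toLinearMap))
      = (3 * n + 2) / 2 := by
  have h := stmt13_general (ZMod p) (Fin n → ZMod p)
  rwa [finrank_fin_fun] at h
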